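/- Assume (H2). Let D be an LD-set for Q and let γ, β be constants with γ ∈ (0,1) and β ∈ (0,γ). Then for any η ∈ (0,1) there exists an LD-set C such that, for any sequence y_{0:n} ∈ Y^{n+1} satisfying Σ_{i=0}^n 1_K(y_i) ≥ (1+γ)n/2, any initial probability measures ν and ν' for which the filtering distributions are well defined, and any n ≥ 1, ‖φ_{ν,n}[y_{0:n}] − φ_{ν',n}[y_{0:n}]‖_TV ≤ ρ_C^{βn} + η^{(γ−β)n/2} · ∏_{i=0}^n Υ_X(y_i)² / [ (ε⁻_D)^{2(n−1)} · Φ_{ν,D}(y₀,y₁) · Φ_{ν',D}(y₀,y₁) · ∏_{i=2}^n Ψ_D(y_i)² ] · ν(V)·ν'(V). -/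

import Mathlib

open MeasureTheory ProbabilityTheory Filter
open scoped ENNReal

/-- A set `C` is a local Doeblin (LD) set for the kernel `Q`, with minorizing/majorizing
measure `lam` and constants `em, ep`. -/
def IsLDSet {X : Type*} [MeasurableSpace X] (Q : Kernel X X) (C : Set X)
    (lam : Measure X) (em ep : ℝ) : Prop :=
  MeasurableSet C ∧ 0 < lam C ∧ 0 < em ∧ 0 < ep ∧
    ∀ x ∈ C, ∀ A : Set X, MeasurableSet A →
      ENNReal.ofReal em * lam (A ∩ C) ≤ Q x (A ∩ C) ∧
        Q x (A ∩ C) ≤ ENNReal.ofReal ep * lam (A ∩ C)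

/-- `QV(x) = ∫ V dQ(x,·)` for a drift function `V`. -/
noncomputable def kernelV {X : Type*} [MeasurableSpace X] (Q : Kernel X X) (V : X → ℝ)
    (x : X) : ℝ≥0∞ :=
  ∫⁻ x', ENNReal.ofReal (V x') ∂(Q x)

/-- `Υ_A(y) = sup_{x ∈ A} g(x,y) QV(x)/V(x)`. -/
noncomputable def Ups {X Y : Type*} [MeasurableSpace X] (Q : Kernel X X)
    (g : X → Y → ℝ) (V : X → ℝ) (A : Set X) (y : Y) : ℝ≥0∞ :=
  ⨆ x ∈ A, ENNReal.ofReal (g x y) * kernelV Q V x / ENNReal.ofReal (V x)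

/-- `Ψ_D(y) = λ_D(g(·,y) 1_D)`. -/
noncomputable def Psi {X Y : Type*} [MeasurableSpace X] (g : X → Y → ℝ)
    (lam : Measure X) (D : Set X) (y : Y) : ℝ≥0∞ :=
  ∫⁻ x in D, ENNReal.ofReal (g x y) ∂lam

/-- `Φ_{ν,D}(y₀,y₁) = ν[g(·,y₀) Q (g(·,y₁) 1_D)]`. -/
noncomputable def Phi {X Y : Type*} [MeasurableSpace X] (Q : Kernel X X)
    (g : X → Y → ℝ) (ν : Measure X) (D : Set X) (y0 y1 : Y) : ℝ≥0∞ :=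
  ∫⁻ x0, ENNReal.ofReal (g x0 y0) * ∫⁻ x1 in D, ENNReal.ofReal (g x1 y1) ∂(Q x0) ∂ν

/-- The unnormalized filtering measures: `filtSeq Q g ν y n` has total mass
`∫ ν(dx₀) g(x₀,y₀) ∏_{i=1}^n Q(x_{i−1},dx_i) g(x_i,y_i)`. -/
noncomputable def filtSeq {X Y : Type*} [MeasurableSpace X] (Q : Kernel X X)
    (g : X → Y → ℝ) (ν : Measure X) (y : ℕ → Y) : ℕ → Measure X
  | 0 => ν.withDensity (fun x => ENNReal.ofReal (g x (y 0)))
  | n + 1 => ((filtSeq Q g ν y n).bind (fun x => Q x)).withDensity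
      (fun x => ENNReal.ofReal (g x (y (n + 1))))

/-- The filtering distribution `φ_{ν,n}[y_{0:n}]` (normalized version of `filtSeq`). -/
noncomputable def filt {X Y : Type*} [MeasurableSpace X] (Q : Kernel X X)
    (g : X → Y → ℝ) (ν : Measure X) (y : ℕ → Y) (n : ℕ) : Measure X :=
  (filtSeq Q g ν y n Set.univ)⁻¹ • filtSeq Q g ν y n

/-- The total variation distance between two (finite) measures,
`sup_A |μ(A) − ν(A)|` over measurable sets `A`. -/
noncomputable def tvDist {X : Type*} [MeasurableSpace X] (μ ν : Measure X) : ℝ :=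
  ⨆ A : {S : Set X // MeasurableSet S}, |(μ A.1).toReal - (ν A.1).toReal|

/-!
Run two independent copies of the hidden chain, started from `ν` and `ν'`. The difference of the
two filters is the antisymmetric part of a Feynman–Kac functional of the pair, normalised by the
product of the two filter masses. On a transition from `C × C` to `C × C` the kernel of the pair
dominates the measure `ε⁻ λ_C ⊗ ε⁻ λ_C`, which is invariant under exchanging the two copies and
carries at least a proportion `(ε⁻ / ε⁺)²` of the mass. This part cancels, so the step is discounted
by `ρ = 1 - (ε⁻ / ε⁺)²`. A trajectory of the pair with few such transitions is often outside `C × C`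
at times when `y i ∈ K`, and the drift function `V ⊗ V` gains a factor `η²` at each of them. The
filter masses are bounded below by keeping the chain in `D`.

The counting of transitions loses a bounded number of factors, which matters only while
`(γ - β) n / 2 < 4`. For those `n` the bound is made trivial by lowering `ε⁻`, which keeps `C` an
LD-set and brings `ρ` close to `1`.
-/

section CommonPart

variable {Z : Type*} [MeasurableSpace Z]

lemma lintegral_le_add_of_smul_le {μ L : Measure Z} [IsFiniteMeasure μ] {δ : ℝ≥0∞}
    (hLμ : L ≤ μ) (hδ : δ • μ ≤ L) {u v w : Z → ℝ≥0∞} (hv : Measurable v)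
    (huvw : ∀ z, u z ≤ v z + w z) (huv : ∫⁻ z, u z ∂L = ∫⁻ z, v z ∂L) :
    ∫⁻ z, u z ∂μ ≤ ∫⁻ z, v z ∂μ + (1 - δ) * ∫⁻ z, w z ∂μ := by
  have : IsFiniteMeasure L := isFiniteMeasure_of_le μ hLμ
  have hsplit (f : Z → ℝ≥0∞) : ∫⁻ z, f z ∂μ = ∫⁻ z, f z ∂(μ - L) + ∫⁻ z, f z ∂L := by
    rw [← lintegral_add_measure, Measure.sub_add_cancel_of_le hLμ]
  have hresidual : μ - L ≤ (1 - δ) • μ := by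
    refine Measure.le_intro fun s hs _ => ?_
    rw [Measure.sub_apply hs hLμ, Measure.smul_apply, smul_eq_mul,
      ENNReal.sub_mul fun _ _ => measure_ne_top μ s, one_mul]
    exact tsub_le_tsub_left (hδ s) _
  calc ∫⁻ z, u z ∂μ
      = ∫⁻ z, u z ∂(μ - L) + ∫⁻ z, v z ∂L := by rw [hsplit, huv]
    _ ≤ (∫⁻ z, v z ∂(μ - L) + ∫⁻ z, w z ∂(μ - L)) + ∫⁻ z, v z ∂L := by
        gcongr
        rw [← lintegral_add_left hv]
        exact lintegral_mono huvw
    _ = ∫⁻ z, v z ∂μ + ∫⁻ z, w z ∂(μ - L) := by rw [hsplit v]; ring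
    _ ≤ ∫⁻ z, v z ∂μ + (1 - δ) * ∫⁻ z, w z ∂μ := by
        gcongr
        exact (lintegral_mono' hresidual le_rfl).trans_eq (lintegral_smul_measure _ _)

end CommonPart

section FeynmanKac

variable {Z : Type*} [MeasurableSpace Z]

/-- The unnormalised Feynman–Kac functional: `feynmanKac P G n f z` is the expectation of
`(∏ i ≤ n, G i (Z i)) * f (Z n)` for the Markov chain `Z` with kernel `P` started at `z`. -/
noncomputable def feynmanKac (P : Kernel Z Z) :
    (ℕ → Z → ℝ≥0∞) → ℕ → (Z → ℝ≥0∞) → Z → ℝ≥0∞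
  | G, 0, f, z => G 0 z * f z
  | G, n + 1, f, z => G 0 z * ∫⁻ z', feynmanKac P (fun i => G (i + 1)) n f z' ∂(P z)

lemma measurable_feynmanKac (P : Kernel Z Z) {f : Z → ℝ≥0∞} (hf : Measurable f) (n : ℕ) :
    ∀ {G : ℕ → Z → ℝ≥0∞}, (∀ i, Measurable (G i)) → Measurable (feynmanKac P G n f) := by
  induction n with
  | zero => exact fun hG => (hG 0).mul hf
  | succ n ih => exact fun hG => (hG 0).mul (ih fun i => hG (i + 1)).lintegral_kernel

lemma feynmanKac_mono {P P' : Kernel Z Z} (hP : ∀ z, P z ≤ P' z) {f f' : Z → ℝ≥0∞}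
    (hf : ∀ z, f z ≤ f' z) (n : ℕ) (G : ℕ → Z → ℝ≥0∞) (z : Z) :
    feynmanKac P G n f z ≤ feynmanKac P' G n f' z := by
  induction n generalizing G z with
  | zero => exact mul_le_mul_right (hf z) _
  | succ n ih => exact mul_le_mul_right (lintegral_mono' (hP z) (ih _)) _

lemma feynmanKac_succ (P : Kernel Z Z) {G : ℕ → Z → ℝ≥0∞} (n : ℕ) (f : Z → ℝ≥0∞) (z : Z) :
    feynmanKac P G (n + 1) f z =
      feynmanKac P G n (fun x => ∫⁻ z', G (n + 1) z' * f z' ∂(P x)) z := by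
  induction n generalizing G z with
  | zero => rfl
  | succ n ih => rw [feynmanKac, feynmanKac]; simp only [ih]

lemma feynmanKac_comp {P : Kernel Z Z} {φ : Z → Z} (hP : ∀ z, MeasurePreserving φ (P z) (P (φ z)))
    {f : Z → ℝ≥0∞} (hf : Measurable f) (n : ℕ) {G : ℕ → Z → ℝ≥0∞} (hG : ∀ i, Measurable (G i))
    (hGφ : ∀ i z, G i (φ z) = G i z) (z : Z) :
    feynmanKac P G n (fun x => f (φ x)) z = feynmanKac P G n f (φ z) := by
  induction n generalizing G z with
  | zero => simp only [feynmanKac, hGφ]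
  | succ n ih =>
    simp only [feynmanKac, hGφ, ih (fun i => hG (i + 1)) fun i => hGφ (i + 1)]
    rw [(hP z).lintegral_comp (measurable_feynmanKac P hf n fun i => hG (i + 1))]

lemma le_of_mul_lintegral_le {μ : Measure Z} [IsProbabilityMeasure μ] {W : Z → ℝ≥0∞}
    (hW : ∀ z, 1 ≤ W z) {a b : ℝ≥0∞} (h : a * ∫⁻ z, W z ∂μ ≤ b) : a ≤ b := by
  have hone : 1 ≤ ∫⁻ z, W z ∂μ := by
    calc (1 : ℝ≥0∞) = ∫⁻ _, 1 ∂μ := by simp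
      _ ≤ ∫⁻ z, W z ∂μ := lintegral_mono hW
  exact (le_mul_of_one_le_right zero_le hone).trans h

lemma feynmanKac_one_le_prod_mul {P : Kernel Z Z} [IsMarkovKernel P] {W : Z → ℝ≥0∞}
    (hW : Measurable W) (hW1 : ∀ z, 1 ≤ W z) (n : ℕ) {G : ℕ → Z → ℝ≥0∞} {U : ℕ → ℝ≥0∞}
    (hU : ∀ i z, G i z * ∫⁻ z', W z' ∂(P z) ≤ U i * W z) (z : Z) :
    feynmanKac P G n 1 z ≤ (∏ i ∈ Finset.range (n + 1), U i) * W z := by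
  induction n generalizing G U z with
  | zero =>
    have h0 : G 0 z ≤ U 0 * W z := le_of_mul_lintegral_le hW1 (hU 0 z)
    simpa [feynmanKac] using h0
  | succ n ih =>
    rw [Finset.prod_range_succ']
    calc feynmanKac P G (n + 1) 1 z
        ≤ G 0 z * ∫⁻ z', (∏ i ∈ Finset.range (n + 1), U (i + 1)) * W z' ∂(P z) := by
          rw [feynmanKac]
          gcongr with z'
          exact ih (fun i => hU (i + 1)) z'
      _ = (∏ i ∈ Finset.range (n + 1), U (i + 1)) * (G 0 z * ∫⁻ z', W z' ∂(P z)) := by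
          rw [lintegral_const_mul _ hW]; ring
      _ ≤ (∏ i ∈ Finset.range (n + 1), U (i + 1)) * (U 0 * W z) :=
          mul_le_mul_right (hU 0 z) _
      _ = (∏ i ∈ Finset.range (n + 1), U (i + 1)) * U 0 * W z := (mul_assoc _ _ _).symm

lemma feynmanKac_parallelComp {X : Type*} [MeasurableSpace X] (P : Kernel Z Z)
    [IsSFiniteKernel P] (Q : Kernel X X) [IsSFiniteKernel Q] {f : Z → ℝ≥0∞} (hf : Measurable f)
    {h : X → ℝ≥0∞} (hh : Measurable h) (n : ℕ) {G : ℕ → Z → ℝ≥0∞} (hG : ∀ i, Measurable (G i))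
    {H : ℕ → X → ℝ≥0∞} (hH : ∀ i, Measurable (H i)) (p : Z × X) :
    feynmanKac (P ∥ₖ Q) (fun i q => G i q.1 * H i q.2) n (fun q => f q.1 * h q.2) p =
      feynmanKac P G n f p.1 * feynmanKac Q H n h p.2 := by
  induction n generalizing G H p with
  | zero => exact mul_mul_mul_comm _ _ _ _
  | succ n ih =>
    simp only [feynmanKac, ih (fun i => hG (i + 1)) fun i => hH (i + 1)]
    rw [Kernel.parallelComp_apply, lintegral_prod_mul
      (measurable_feynmanKac P hf n fun i => hG (i + 1)).aemeasurable
      (measurable_feynmanKac Q hh n fun i => hH (i + 1)).aemeasurable, mul_mul_mul_comm]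

end FeynmanKac

section Discount

variable {Z : Type*} [MeasurableSpace Z] {P : Kernel Z Z} {S : Set Z}

/-- The kernel `P` with its transitions from `S` into `S` reweighted by the factor `r`.
It is the zero kernel if `S` is not measurable. -/
noncomputable def discountedKernel (P : Kernel Z Z) [IsSFiniteKernel P] (S : Set Z)
    (r : ℝ≥0∞) : Kernel Z Z :=
  P.withDensity fun z z' => (S ×ˢ S).mulIndicator (fun _ => r) (z, z')

lemma measurable_mulIndicator_prod_self (hS : MeasurableSet S) (r : ℝ≥0∞) :
    Measurable (Function.uncurry fun z z' : Z => (S ×ˢ S).mulIndicator (fun _ => r) (z, z')) :=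
  measurable_const.piecewise (hS.prod hS) measurable_one

lemma discountedKernel_apply [IsSFiniteKernel P] (hS : MeasurableSet S) (r : ℝ≥0∞) (z : Z) :
    discountedKernel P S r z =
      (P z).withDensity fun z' => (S ×ˢ S).mulIndicator (fun _ => r) (z, z') :=
  Kernel.withDensity_apply P (measurable_mulIndicator_prod_self hS r) z

lemma discountedKernel_apply_of_notMem [IsSFiniteKernel P] (hS : MeasurableSet S) (r : ℝ≥0∞)
    {z : Z} (hz : z ∉ S) : discountedKernel P S r z = P z := by
  simp [discountedKernel_apply hS, hz]

lemma discountedKernel_le [IsSFiniteKernel P] (hS : MeasurableSet S) {r : ℝ≥0∞} (hr : r ≤ 1)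
    (z : Z) : discountedKernel P S r z ≤ P z := by
  rw [discountedKernel_apply hS]
  nth_rw 2 [← withDensity_one (μ := P z)]
  exact withDensity_mono (.of_forall fun z' => Set.mulIndicator_apply_le_one fun _ => hr)

lemma lintegral_discountedKernel [IsSFiniteKernel P] (hS : MeasurableSet S) (r : ℝ≥0∞)
    {w : Z → ℝ≥0∞} (hw : Measurable w) (z : Z) :
    ∫⁻ z', w z' ∂(discountedKernel P S r z) =
      ∫⁻ z', (S ×ˢ S).mulIndicator (fun _ => r) (z, z') * w z' ∂(P z) :=
  Kernel.lintegral_withDensity P (measurable_mulIndicator_prod_self hS r) z hw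

lemma lintegral_discountedKernel_of_mem [IsSFiniteKernel P] (hS : MeasurableSet S) (r : ℝ≥0∞)
    {w : Z → ℝ≥0∞} (hw : Measurable w) {z : Z} (hz : z ∈ S) :
    ∫⁻ z', w z' ∂(discountedKernel P S r z) =
      r * ∫⁻ z' in S, w z' ∂(P z) + ∫⁻ z' in Sᶜ, w z' ∂(P z) := by
  rw [lintegral_discountedKernel hS r hw, ← lintegral_add_compl _ hS, ← lintegral_const_mul _ hw]
  congr 1
  · exact setLIntegral_congr_fun hS fun z' hz' => by simp [hz, hz']
  · exact setLIntegral_congr_fun hS.compl fun z' hz' => by simp [Set.notMem_of_mem_compl hz']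

lemma lintegral_le_add_lintegral_discountedKernel [IsFiniteKernel P] (hS : MeasurableSet S)
    {φ : Z → Z} {δ : ℝ≥0∞}
    (hφ : ∀ z ∈ S, ∃ L : Measure Z, MeasurePreserving φ L L ∧ L ≤ (P z).restrict S ∧
      δ • (P z).restrict S ≤ L)
    {u w : Z → ℝ≥0∞} (hu : Measurable u) (huφ : Measurable fun z => u (φ z)) (hw : Measurable w)
    (huw : ∀ z, u z ≤ u (φ z) + w z) (z : Z) :
    ∫⁻ z', u z' ∂(P z) ≤
      ∫⁻ z', u (φ z') ∂(P z) + ∫⁻ z', w z' ∂(discountedKernel P S (1 - δ) z) := by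
  by_cases hz : z ∈ S
  · obtain ⟨L, hLφ, hLP, hδ⟩ := hφ z hz
    have hinside : ∫⁻ z' in S, u z' ∂(P z) ≤
        ∫⁻ z' in S, u (φ z') ∂(P z) + (1 - δ) * ∫⁻ z' in S, w z' ∂(P z) :=
      lintegral_le_add_of_smul_le hLP hδ huφ huw (hLφ.lintegral_comp hu).symm
    have houtside : ∫⁻ z' in Sᶜ, u z' ∂(P z) ≤
        ∫⁻ z' in Sᶜ, u (φ z') ∂(P z) + ∫⁻ z' in Sᶜ, w z' ∂(P z) := by
      rw [← lintegral_add_left huφ]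
      exact lintegral_mono huw
    rw [lintegral_discountedKernel_of_mem hS _ hw hz, ← lintegral_add_compl u hS,
      ← lintegral_add_compl (fun z' => u (φ z')) hS, add_add_add_comm]
    exact add_le_add hinside houtside
  · rw [discountedKernel_apply_of_notMem hS _ hz, ← lintegral_add_left huφ]
    exact lintegral_mono huw

theorem feynmanKac_le_add_discountedKernel [IsFiniteKernel P] (hS : MeasurableSet S)
    {φ : Z → Z} (hP : ∀ z, MeasurePreserving φ (P z) (P (φ z))) {δ : ℝ≥0∞}
    (hδ : ∀ z ∈ S, ∃ L : Measure Z, MeasurePreserving φ L L ∧ L ≤ (P z).restrict S ∧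
      δ • (P z).restrict S ≤ L)
    {f : Z → ℝ≥0∞} (hf : Measurable f) (n : ℕ) {G : ℕ → Z → ℝ≥0∞} (hG : ∀ i, Measurable (G i))
    (hGφ : ∀ i z, G i (φ z) = G i z) (z : Z) :
    feynmanKac P G n f z ≤ feynmanKac P G n (fun x => f (φ x)) z +
      feynmanKac (discountedKernel P S (1 - δ)) G n f z := by
  induction n generalizing G z with
  | zero => exact le_add_self
  | succ n ih =>
    have hG' : ∀ i, Measurable (G (i + 1)) := fun i => hG (i + 1)
    have hcomp := feynmanKac_comp hP hf n hG' fun i => hGφ (i + 1)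
    have hu := measurable_feynmanKac P hf n hG'
    simp only [hcomp, feynmanKac] at ih ⊢
    rw [← mul_add]
    gcongr
    exact lintegral_le_add_lintegral_discountedKernel hS hδ hu (hu.comp (hP z).measurable)
      (measurable_feynmanKac _ hf n hG') (by simpa only [hcomp] using ih hG' fun i => hGφ (i + 1)) z

lemma feynmanKac_discountedKernel_succ_le [IsSFiniteKernel P] (hS : MeasurableSet S)
    {r a e : ℝ≥0∞} {W : Z → ℝ≥0∞} (hW : Measurable W) {c j n : ℕ} {G : ℕ → Z → ℝ≥0∞}
    (hG : ∀ i, Measurable (G i)) {U : ℕ → ℝ≥0∞} {z : Z}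
    (hz : G 0 z * ∫⁻ z', W z' ∂(P z) ≤ e ^ j * (U 0 * W z))
    (h : ∀ z', (S ×ˢ S).mulIndicator (fun _ => r) (z, z') *
        feynmanKac (discountedKernel P S r) (fun i => G (i + 1)) n 1 z' ≤
      a * feynmanKac P (fun i => G (i + 1)) n 1 z' +
        e ^ c * ((∏ i ∈ Finset.range (n + 1), U (i + 1)) * W z')) :
    feynmanKac (discountedKernel P S r) G (n + 1) 1 z ≤ a * feynmanKac P G (n + 1) 1 z +
      e ^ (c + j) * ((∏ i ∈ Finset.range (n + 1 + 1), U i) * W z) := by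
  have hmeas (P' : Kernel Z Z) : Measurable (feynmanKac P' (fun i => G (i + 1)) n 1) :=
    measurable_feynmanKac P' measurable_one n fun i => hG (i + 1)
  simp only [feynmanKac, Finset.prod_range_succ' U (n + 1)]
  set p := ∏ i ∈ Finset.range (n + 1), U (i + 1)
  rw [lintegral_discountedKernel hS r (hmeas _)]
  calc _ ≤ G 0 z * ∫⁻ z', (a * feynmanKac P (fun i => G (i + 1)) n 1 z' +
          e ^ c * (p * W z')) ∂(P z) := by
        gcongr with z'
        exact h z'
    _ = a * (G 0 z * ∫⁻ z', feynmanKac P (fun i => G (i + 1)) n 1 z' ∂(P z)) +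
          e ^ c * p * (G 0 z * ∫⁻ z', W z' ∂(P z)) := by
        rw [lintegral_add_left ((hmeas P).const_mul a), lintegral_const_mul _ (hmeas P),
          lintegral_const_mul _ (hW.const_mul p), lintegral_const_mul _ hW]
        ring
    _ ≤ a * (G 0 z * ∫⁻ z', feynmanKac P (fun i => G (i + 1)) n 1 z' ∂(P z)) +
          e ^ c * p * (e ^ j * (U 0 * W z)) := by gcongr
    _ = _ := by ring

lemma feynmanKac_discountedKernel_le_of_eq_zero [IsMarkovKernel P] (hS : MeasurableSet S)
    {r : ℝ≥0∞} (hr : r ≤ 1) {W : Z → ℝ≥0∞} (hW : Measurable W) (hW1 : ∀ z, 1 ≤ W z) (e : ℝ≥0∞)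
    (n : ℕ) {G : ℕ → Z → ℝ≥0∞} {U : ℕ → ℝ≥0∞}
    (hU : ∀ i z, G i z * ∫⁻ z', W z' ∂(P z) ≤ U i * W z) {c t : ℕ} (hct : c = 0 ∨ t = 0) (z : Z) :
    feynmanKac (discountedKernel P S r) G n 1 z ≤
      r ^ t * feynmanKac P G n 1 z + e ^ c * ((∏ i ∈ Finset.range (n + 1), U i) * W z) := by
  have hle : feynmanKac (discountedKernel P S r) G n 1 z ≤ feynmanKac P G n 1 z :=
    feynmanKac_mono (discountedKernel_le hS hr) (fun _ => le_rfl) n G z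
  rcases hct with rfl | rfl
  · rw [pow_zero, one_mul]
    exact (hle.trans (feynmanKac_one_le_prod_mul hW hW1 n hU z)).trans le_add_self
  · rw [pow_zero, one_mul]
    exact hle.trans le_self_add

-- Every time spent outside `S` spoils at most two steps from `S` to `S`, and only one if it is the
-- initial time. So `hct` forces each trajectory either to make `t` steps from `S` to `S`, or to be
-- outside `S` at `c` of the times satisfying `J`.
open Classical in
theorem feynmanKac_discountedKernel_le [IsMarkovKernel P] (hS : MeasurableSet S) {r : ℝ≥0∞}
    (hr : r ≤ 1) {W : Z → ℝ≥0∞} (hW : Measurable W) (hW1 : ∀ z, 1 ≤ W z) {e : ℝ≥0∞} (n : ℕ)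
    {G : ℕ → Z → ℝ≥0∞} (hG : ∀ i, Measurable (G i)) {U : ℕ → ℝ≥0∞} {J : ℕ → Prop}
    (hU : ∀ i z, G i z * ∫⁻ z', W z' ∂(P z) ≤ U i * W z)
    (hJ : ∀ i z, J i → z ∉ S → G i z * ∫⁻ z', W z' ∂(P z) ≤ e * (U i * W z)) {c t : ℕ} {z : Z}
    (hct : 2 * c + t + 2 * Nat.count (fun i => ¬ J i) (n + 1) ≤ n + 1 + if z ∈ S then 0 else 1) :
    feynmanKac (discountedKernel P S r) G n 1 z ≤
      r ^ t * feynmanKac P G n 1 z + e ^ c * ((∏ i ∈ Finset.range (n + 1), U i) * W z) := by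
  induction n generalizing G U J c t z with
  | zero =>
    exact feynmanKac_discountedKernel_le_of_eq_zero hS hr hW hW1 e 0 hU
      (by split_ifs at hct <;> omega) z
  | succ n ih =>
    by_cases hzero : c = 0 ∨ t = 0
    · exact feynmanKac_discountedKernel_le_of_eq_zero hS hr hW hW1 e _ hU hzero z
    rw [Nat.count_succ'] at hct
    have hstep {c' t' : ℕ} {z' : Z} := ih (c := c') (t := t') (z := z') (fun i => hG (i + 1))
      (fun i => hU (i + 1)) fun i => hJ (i + 1)
    by_cases hz : z ∈ S
    · refine feynmanKac_discountedKernel_succ_le (j := 0) hS hW hG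
        (by simpa using hU 0 z) fun z' => ?_
      by_cases hz' : z' ∈ S
      · obtain ⟨s, rfl⟩ : ∃ s, t = s + 1 := ⟨t - 1, by omega⟩
        rw [Set.mulIndicator_of_mem (Set.mk_mem_prod hz hz'), pow_succ', mul_assoc r]
        refine (mul_le_mul_right (hstep (c' := c) (t' := s) ?_) r).trans ?_
        · simp only [hz, hz', if_true] at hct ⊢
          omega
        · rw [mul_add]
          exact add_le_add le_rfl (mul_le_of_le_one_left zero_le hr)
      · rw [Set.mulIndicator_of_notMem (by simp [hz']), one_mul]
        refine hstep ?_
        simp only [hz, hz', if_true, if_false] at hct ⊢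
        omega
    · obtain ⟨d, j, rfl, hj, hd⟩ : ∃ d j, c = d + j ∧
          G 0 z * ∫⁻ z', W z' ∂(P z) ≤ e ^ j * (U 0 * W z) ∧
          2 * d + t + 2 * Nat.count (fun i => ¬ J (i + 1)) (n + 1) ≤ n + 1 := by
        simp only [hz, if_false] at hct
        by_cases hJ0 : J 0
        · simp only [hJ0, not_true, if_false] at hct
          exact ⟨c - 1, 1, by omega, by simpa using hJ 0 z hJ0 hz, by omega⟩
        · simp only [hJ0, not_false_eq_true, if_true] at hct
          exact ⟨c, 0, rfl, by simpa using hU 0 z, by omega⟩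
      refine feynmanKac_discountedKernel_succ_le hS hW hG hj fun z' => ?_
      rw [Set.mulIndicator_of_notMem (by simp [hz]), one_mul]
      exact hstep (hd.trans (Nat.le_add_right _ _))

end Discount

section LocalDoeblin

variable {X : Type*} [MeasurableSpace X] {Q : Kernel X X} {C : Set X} {lam : Measure X}
  {em ep : ℝ}

namespace IsLDSet

lemma of_le (h : IsLDSet Q C lam em ep) {em' : ℝ} (hem' : 0 < em') (hle : em' ≤ em) :
    IsLDSet Q C lam em' ep :=
  ⟨h.1, h.2.1, hem', h.2.2.2.1, fun x hx A hA =>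
    ⟨le_trans (by gcongr) (h.2.2.2.2 x hx A hA).1, (h.2.2.2.2 x hx A hA).2⟩⟩

lemma smul_restrict_le (h : IsLDSet Q C lam em ep) {x : X} (hx : x ∈ C) :
    ENNReal.ofReal em • lam.restrict C ≤ (Q x).restrict C :=
  Measure.le_intro fun A hA _ => by
    simpa only [Measure.smul_apply, smul_eq_mul, Measure.restrict_apply hA]
      using (h.2.2.2.2 x hx A hA).1

lemma restrict_le_smul (h : IsLDSet Q C lam em ep) {x : X} (hx : x ∈ C) :
    (Q x).restrict C ≤ ENNReal.ofReal ep • lam.restrict C :=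
  Measure.le_intro fun A hA _ => by
    simpa only [Measure.smul_apply, smul_eq_mul, Measure.restrict_apply hA]
      using (h.2.2.2.2 x hx A hA).2

lemma ofReal_div_smul_restrict_le (h : IsLDSet Q C lam em ep) {x : X} (hx : x ∈ C) :
    ENNReal.ofReal (em / ep) • (Q x).restrict C ≤ ENNReal.ofReal em • lam.restrict C := by
  obtain ⟨-, -, hem, hep, -⟩ := id h
  calc ENNReal.ofReal (em / ep) • (Q x).restrict C
      ≤ ENNReal.ofReal (em / ep) • ENNReal.ofReal ep • lam.restrict C := by
        gcongr
        exact h.restrict_le_smul hx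
    _ = ENNReal.ofReal em • lam.restrict C := by
        rw [smul_smul, ← ENNReal.ofReal_mul (by positivity), div_mul_cancel₀ _ hep.ne']

lemma exists_swap_invariant_minorant [IsFiniteKernel Q] (h : IsLDSet Q C lam em ep)
    {p : X × X} (hp : p ∈ C ×ˢ C) :
    ∃ L : Measure (X × X), MeasurePreserving Prod.swap L L ∧
      L ≤ ((Q ∥ₖ Q) p).restrict (C ×ˢ C) ∧
      ENNReal.ofReal (em / ep) ^ 2 • ((Q ∥ₖ Q) p).restrict (C ×ˢ C) ≤ L := by
  have hfin : IsFiniteMeasure (ENNReal.ofReal em • lam.restrict C) :=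
    isFiniteMeasure_of_le _ (h.smul_restrict_le hp.1)
  refine ⟨(ENNReal.ofReal em • lam.restrict C).prod (ENNReal.ofReal em • lam.restrict C),
    Measure.measurePreserving_swap, ?_, ?_⟩
  · rw [Kernel.parallelComp_apply, ← Measure.prod_restrict]
    exact Measure.prod_mono (h.smul_restrict_le hp.1) (h.smul_restrict_le hp.2)
  · rw [Kernel.parallelComp_apply, ← Measure.prod_restrict, sq, mul_smul,
      ← Measure.prod_smul_right, ← Measure.prod_smul_left]
    exact Measure.prod_mono (h.ofReal_div_smul_restrict_le hp.1)
      (h.ofReal_div_smul_restrict_le hp.2)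

theorem feynmanKac_mul_feynmanKac_le [IsFiniteKernel Q] (h : IsLDSet Q C lam em ep) (n : ℕ)
    {G : ℕ → X → ℝ≥0∞} (hG : ∀ i, Measurable (G i)) {f : X → ℝ≥0∞} (hf : Measurable f)
    (hf1 : f ≤ 1) (p : X × X) :
    feynmanKac Q G n f p.1 * feynmanKac Q G n 1 p.2 ≤
      feynmanKac Q G n 1 p.1 * feynmanKac Q G n f p.2 +
        feynmanKac (discountedKernel (Q ∥ₖ Q) (C ×ˢ C) (1 - ENNReal.ofReal (em / ep) ^ 2))
          (fun i q => G i q.1 * G i q.2) n 1 p := by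
  have hG₂ (i : ℕ) : Measurable fun q : X × X => G i q.1 * G i q.2 := by fun_prop
  have hswap (q : X × X) : MeasurePreserving Prod.swap ((Q ∥ₖ Q) q) ((Q ∥ₖ Q) q.swap) := by
    rw [Kernel.parallelComp_apply, Kernel.parallelComp_apply]
    exact Measure.measurePreserving_swap
  have hcoupling := feynmanKac_le_add_discountedKernel (h.1.prod h.1) hswap
    (fun q hq => h.exists_swap_invariant_minorant hq) (hf.comp measurable_fst) n hG₂
    (fun i q => mul_comm _ _) p
  have hleft := feynmanKac_parallelComp Q Q hf measurable_one n hG hG p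
  have hright := feynmanKac_parallelComp Q Q measurable_one hf n hG hG p
  simp only [Pi.one_apply, mul_one, one_mul] at hleft hright
  rw [← hleft, ← hright]
  exact hcoupling.trans
    (add_le_add le_rfl (feynmanKac_mono (fun _ => le_rfl) (fun q => hf1 q.1) n _ p))

end IsLDSet

open Classical in
lemma feynmanKac_discountedKernel_parallelComp_le [IsMarkovKernel Q] (hC : MeasurableSet C)
    {r : ℝ≥0∞} (hr : r ≤ 1) {W : X → ℝ≥0∞} (hW : Measurable W) (hW1 : ∀ x, 1 ≤ W x) {e : ℝ≥0∞}
    {n : ℕ} {G : ℕ → X → ℝ≥0∞} (hG : ∀ i, Measurable (G i)) {U : ℕ → ℝ≥0∞} {J : ℕ → Prop}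
    (hU : ∀ i x, G i x * ∫⁻ x', W x' ∂(Q x) ≤ U i * W x)
    (hJ : ∀ i x, J i → x ∉ C → G i x * ∫⁻ x', W x' ∂(Q x) ≤ e * (U i * W x)) {c t : ℕ}
    (hct : 2 * c + t + 2 * Nat.count (fun i => ¬ J i) (n + 1) ≤ n + 1) (p : X × X) :
    feynmanKac (discountedKernel (Q ∥ₖ Q) (C ×ˢ C) r) (fun i q => G i q.1 * G i q.2) n 1 p ≤
      r ^ t * (feynmanKac Q G n 1 p.1 * feynmanKac Q G n 1 p.2) +
        e ^ c * ((∏ i ∈ Finset.range (n + 1), U i ^ 2) * (W p.1 * W p.2)) := by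
  have hdrift (i : ℕ) (q : X × X) :
      G i q.1 * G i q.2 * ∫⁻ q', W q'.1 * W q'.2 ∂((Q ∥ₖ Q) q) =
        (G i q.1 * ∫⁻ x', W x' ∂(Q q.1)) * (G i q.2 * ∫⁻ x', W x' ∂(Q q.2)) := by
    rw [Kernel.parallelComp_apply, lintegral_prod_mul hW.aemeasurable hW.aemeasurable,
      mul_mul_mul_comm]
  have hmass := feynmanKac_parallelComp Q Q measurable_one measurable_one n hG hG p
  simp only [Pi.one_apply, mul_one] at hmass
  rw [← hmass]
  refine feynmanKac_discountedKernel_le (P := Q ∥ₖ Q) (J := J) (hC.prod hC) hr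
    (W := fun q => W q.1 * W q.2) (by fun_prop) (fun q => one_le_mul (hW1 _) (hW1 _)) n
    (fun i => by fun_prop) (fun i q => ?_) (fun i q hi hq => ?_) (hct.trans (Nat.le_add_right _ _))
  · rw [hdrift]
    exact (mul_le_mul' (hU i q.1) (hU i q.2)).trans_eq (by ring)
  · rw [hdrift]
    rcases not_and_or.mp hq with hq | hq
    · exact (mul_le_mul' (hJ i q.1 hi hq) (hU i q.2)).trans_eq (by ring)
    · exact (mul_le_mul' (hU i q.1) (hJ i q.2 hi hq)).trans_eq (by ring)

end LocalDoeblin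

section FilteringMass

variable {X Y : Type*} [MeasurableSpace X] {Q : Kernel X X} {g : X → Y → ℝ}

lemma lintegral_filtSeq (hg : ∀ y, Measurable fun x => g x y) (ν : Measure X) (y : ℕ → Y) (n : ℕ)
    {f : X → ℝ≥0∞} (hf : Measurable f) :
    ∫⁻ x, f x ∂(filtSeq Q g ν y n) =
      ∫⁻ x, feynmanKac Q (fun i x => ENNReal.ofReal (g x (y i))) n f x ∂ν := by
  induction n generalizing f with
  | zero => exact lintegral_withDensity_eq_lintegral_mul ν (hg (y 0)).ennreal_ofReal hf
  | succ n ih =>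
    have hgn := (hg (y (n + 1))).ennreal_ofReal
    rw [filtSeq, lintegral_withDensity_eq_lintegral_mul _ hgn hf,
      Measure.lintegral_bind Q.measurable.aemeasurable (hgn.mul hf).aemeasurable,
      ih (hgn.mul hf).lintegral_kernel]
    exact lintegral_congr fun x => (feynmanKac_succ Q n f x).symm

lemma filtSeq_apply (hg : ∀ y, Measurable fun x => g x y) (ν : Measure X) (y : ℕ → Y) (n : ℕ)
    {A : Set X} (hA : MeasurableSet A) :
    filtSeq Q g ν y n A =
      ∫⁻ x, feynmanKac Q (fun i x => ENNReal.ofReal (g x (y i))) n (A.indicator 1) x ∂ν := by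
  rw [← lintegral_filtSeq hg ν y n (measurable_one.indicator hA), lintegral_indicator_one hA]

lemma filtSeq_univ (hg : ∀ y, Measurable fun x => g x y) (ν : Measure X) (y : ℕ → Y) (n : ℕ) :
    filtSeq Q g ν y n Set.univ =
      ∫⁻ x, feynmanKac Q (fun i x => ENNReal.ofReal (g x (y i))) n 1 x ∂ν := by
  rw [filtSeq_apply hg ν y n .univ, Set.indicator_univ]

lemma ofReal_mul_kernelV_le_Ups_mul {V : X → ℝ} (hV1 : ∀ x, 1 ≤ V x) {A : Set X} {x : X}
    (hx : x ∈ A) (y : Y) :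
    ENNReal.ofReal (g x y) * kernelV Q V x ≤ Ups Q g V A y * ENNReal.ofReal (V x) := by
  have hVx : ENNReal.ofReal (V x) ≠ 0 := by simpa using one_pos.trans_le (hV1 x)
  rw [← ENNReal.div_le_iff hVx ENNReal.ofReal_ne_top]
  exact le_iSup₂ (f := fun x (_ : x ∈ A) =>
    ENNReal.ofReal (g x y) * kernelV Q V x / ENNReal.ofReal (V x)) x hx

lemma filtSeq_univ_le [IsMarkovKernel Q] (hg : ∀ y, Measurable fun x => g x y) {V : X → ℝ}
    (hV : Measurable V) (hV1 : ∀ x, 1 ≤ V x) (ν : Measure X) (y : ℕ → Y) (n : ℕ) :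
    filtSeq Q g ν y n Set.univ ≤
      (∏ i ∈ Finset.range (n + 1), Ups Q g V Set.univ (y i)) * ∫⁻ x, ENNReal.ofReal (V x) ∂ν := by
  rw [filtSeq_univ hg, ← lintegral_const_mul _ hV.ennreal_ofReal]
  exact lintegral_mono (feynmanKac_one_le_prod_mul hV.ennreal_ofReal
    (fun x => ENNReal.one_le_ofReal.mpr (hV1 x)) n
    fun i x => ofReal_mul_kernelV_le_Ups_mul hV1 (Set.mem_univ x) (y i))

lemma filtSeq_succ_apply (hg : ∀ y, Measurable fun x => g x y) (ν : Measure X) (y : ℕ → Y) (n : ℕ)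
    {A : Set X} (hA : MeasurableSet A) :
    filtSeq Q g ν y (n + 1) A =
      ∫⁻ x, ∫⁻ x' in A, ENNReal.ofReal (g x' (y (n + 1))) ∂(Q x) ∂(filtSeq Q g ν y n) := by
  rw [filtSeq, withDensity_apply _ hA, ← lintegral_indicator hA, Measure.lintegral_bind
    Q.measurable.aemeasurable ((hg _).ennreal_ofReal.indicator hA).aemeasurable]
  simp only [lintegral_indicator hA]

lemma filtSeq_one_apply [IsSFiniteKernel Q] (hg : ∀ y, Measurable fun x => g x y)
    (ν : Measure X) (y : ℕ → Y) {D : Set X} (hD : MeasurableSet D) :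
    filtSeq Q g ν y 1 D = Phi Q g ν D (y 0) (y 1) := by
  rw [filtSeq_succ_apply hg ν y 0 hD]
  exact lintegral_withDensity_eq_lintegral_mul ν (hg (y 0)).ennreal_ofReal
    ((hg (y 1)).ennreal_ofReal.setLIntegral_kernel hD)

lemma IsLDSet.pow_mul_Phi_mul_prod_Psi_le [IsSFiniteKernel Q] {D : Set X} {lam : Measure X}
    {em ep : ℝ} (h : IsLDSet Q D lam em ep) (hg : ∀ y, Measurable fun x => g x y)
    (ν : Measure X) (y : ℕ → Y) (n : ℕ) :
    ENNReal.ofReal em ^ n * Phi Q g ν D (y 0) (y 1) *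
        ∏ i ∈ Finset.Icc 2 (n + 1), Psi g lam D (y i) ≤ filtSeq Q g ν y (n + 1) D := by
  induction n with
  | zero => simp [filtSeq_one_apply hg ν y h.1]
  | succ n ih =>
    rw [filtSeq_succ_apply hg ν y _ h.1, Finset.prod_Icc_succ_top (by omega)]
    set ψ := Psi g lam D (y (n + 1 + 1)) with hψ
    calc _ = ENNReal.ofReal em * ψ * (ENNReal.ofReal em ^ n * Phi Q g ν D (y 0) (y 1) *
            ∏ i ∈ Finset.Icc 2 (n + 1), Psi g lam D (y i)) := by ring
      _ ≤ ENNReal.ofReal em * ψ * filtSeq Q g ν y (n + 1) D := mul_le_mul_right ih _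
      _ = ∫⁻ _ in D, ENNReal.ofReal em * ψ ∂(filtSeq Q g ν y (n + 1)) := by rw [setLIntegral_const]
      _ ≤ ∫⁻ x in D, ∫⁻ x' in D, ENNReal.ofReal (g x' (y (n + 1 + 1))) ∂(Q x)
            ∂(filtSeq Q g ν y (n + 1)) := by
          refine setLIntegral_mono' h.1 fun x hx => ?_
          rw [hψ, Psi, ← smul_eq_mul, ← lintegral_smul_measure]
          exact lintegral_mono' (h.smul_restrict_le hx) le_rfl
      _ ≤ _ := setLIntegral_le_lintegral _ _

open Classical in
theorem filtSeq_mul_filtSeq_univ_le [IsMarkovKernel Q] (hg : ∀ y, Measurable fun x => g x y)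
    {C : Set X} {lam : Measure X} {em ep : ℝ} (h : IsLDSet Q C lam em ep) {V : X → ℝ}
    (hV : Measurable V) (hV1 : ∀ x, 1 ≤ V x) {e : ℝ≥0∞} {K : Set Y}
    (hK : ∀ y ∈ K, Ups Q g V Cᶜ y ≤ e * Ups Q g V Set.univ y) {n : ℕ} {y : ℕ → Y} {c t : ℕ}
    (hct : 2 * c + t + 2 * Nat.count (fun i => y i ∉ K) (n + 1) ≤ n + 1)
    (ν ν' : Measure X) [SFinite ν'] {A : Set X} (hA : MeasurableSet A) :
    filtSeq Q g ν y n A * filtSeq Q g ν' y n Set.univ ≤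
      filtSeq Q g ν y n Set.univ * filtSeq Q g ν' y n A +
        ((1 - ENNReal.ofReal (em / ep) ^ 2) ^ t *
            (filtSeq Q g ν y n Set.univ * filtSeq Q g ν' y n Set.univ) +
          e ^ c * ((∏ i ∈ Finset.range (n + 1), Ups Q g V Set.univ (y i) ^ 2) *
            ((∫⁻ x, ENNReal.ofReal (V x) ∂ν) * ∫⁻ x, ENNReal.ofReal (V x) ∂ν'))) := by
  have hG (i : ℕ) : Measurable fun x => ENNReal.ofReal (g x (y i)) := (hg (y i)).ennreal_ofReal
  have hind : Measurable (A.indicator (1 : X → ℝ≥0∞)) := measurable_one.indicator hA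
  have hone := measurable_feynmanKac Q measurable_one n hG
  have hA' := measurable_feynmanKac Q hind n hG
  rw [filtSeq_univ hg, filtSeq_univ hg, filtSeq_apply hg ν y n hA, filtSeq_apply hg ν' y n hA,
    ← lintegral_prod_mul hA'.aemeasurable hone.aemeasurable,
    ← lintegral_prod_mul hone.aemeasurable hA'.aemeasurable,
    ← lintegral_prod_mul hone.aemeasurable hone.aemeasurable,
    ← lintegral_prod_mul hV.ennreal_ofReal.aemeasurable hV.ennreal_ofReal.aemeasurable,
    ← lintegral_const_mul _ (by fun_prop), ← lintegral_const_mul _ (by fun_prop),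
    ← lintegral_const_mul _ (by fun_prop), ← lintegral_add_left (by fun_prop),
    ← lintegral_add_left (by fun_prop)]
  refine lintegral_mono fun p => (h.feynmanKac_mul_feynmanKac_le n hG hind
    (Set.indicator_le_self _ _) p).trans (add_le_add le_rfl ?_)
  refine feynmanKac_discountedKernel_parallelComp_le h.1 tsub_le_self hV.ennreal_ofReal
    (fun x => ENNReal.one_le_ofReal.mpr (hV1 x)) hG
    (fun i x => ofReal_mul_kernelV_le_Ups_mul hV1 (Set.mem_univ x) (y i)) (J := fun i => y i ∈ K)
    (fun i x hi hx => ?_) hct p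
  rw [← mul_assoc]
  exact (ofReal_mul_kernelV_le_Ups_mul hV1 hx (y i)).trans (mul_le_mul_left (hK _ hi) _)

end FilteringMass

section TotalVariation

variable {X : Type*} [MeasurableSpace X]

lemma ofReal_tvDist_le {μ ν : Measure X} [IsProbabilityMeasure μ] [IsProbabilityMeasure ν]
    {B : ℝ≥0∞} (h : ∀ A, MeasurableSet A → μ A ≤ ν A + B) : ENNReal.ofReal (tvDist μ ν) ≤ B := by
  rcases eq_or_ne B ⊤ with rfl | hB
  · exact le_top
  have hreal (A : Set X) (hA : MeasurableSet A) : μ.real A ≤ ν.real A + B.toReal := by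
    rw [measureReal_def, measureReal_def, ← ENNReal.toReal_add (measure_ne_top ν A) hB]
    exact ENNReal.toReal_mono (by finiteness) (h A hA)
  have : Nonempty {A : Set X // MeasurableSet A} := ⟨⟨∅, .empty⟩⟩
  refine ENNReal.ofReal_le_of_le_toReal (ciSup_le fun ⟨A, hA⟩ => ?_)
  have hcompl := hreal Aᶜ hA.compl
  rw [probReal_compl_eq_one_sub hA, probReal_compl_eq_one_sub hA] at hcompl
  exact abs_sub_le_iff.mpr ⟨sub_le_iff_le_add'.mpr (hreal A hA), show ν.real A - μ.real A ≤ _ by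
    linarith⟩

lemma ofReal_tvDist_inv_smul_le {μ ν : Measure X} [IsFiniteMeasure μ] [NeZero μ]
    [IsFiniteMeasure ν] [NeZero ν] {B : ℝ≥0∞}
    (h : ∀ A, MeasurableSet A → μ A * ν Set.univ ≤ μ Set.univ * ν A + B) :
    ENNReal.ofReal (tvDist ((μ Set.univ)⁻¹ • μ) ((ν Set.univ)⁻¹ • ν)) ≤
      B / (μ Set.univ * ν Set.univ) := by
  have hμ : μ Set.univ ≠ 0 := NeZero.ne _
  have hν : ν Set.univ ≠ 0 := NeZero.ne _
  refine ofReal_tvDist_le fun A hA => ?_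
  simp only [Measure.smul_apply, smul_eq_mul]
  calc (μ Set.univ)⁻¹ * μ A = μ A * ν Set.univ / (μ Set.univ * ν Set.univ) := by
        rw [ENNReal.mul_div_mul_right _ _ hν (measure_ne_top ν _), mul_comm, div_eq_mul_inv]
    _ ≤ (μ Set.univ * ν A + B) / (μ Set.univ * ν Set.univ) := by gcongr; exact h A hA
    _ = (ν Set.univ)⁻¹ * ν A + B / (μ Set.univ * ν Set.univ) := by
        rw [ENNReal.add_div, ENNReal.mul_div_mul_left _ _ hμ (measure_ne_top μ _), mul_comm _ (ν A),
          div_eq_mul_inv]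

end TotalVariation

section Forgetting

variable {X Y : Type*} [MeasurableSpace X] {Q : Kernel X X} {g : X → Y → ℝ} {V : X → ℝ}
  {C D : Set X} {lam lamD : Measure X} {em ep emD epD : ℝ} {ν ν' : Measure X} {y : ℕ → Y} {n : ℕ}

/-- The data-dependent factor of the forgetting bound: the drift upper bound on the product of the
two filter masses, divided by its lower bound through `D`. -/
noncomputable def forgettingRatio (Q : Kernel X X) (g : X → Y → ℝ) (V : X → ℝ) (D : Set X)
    (lamD : Measure X) (emD : ℝ) (ν ν' : Measure X) (y : ℕ → Y) (n : ℕ) : ℝ≥0∞ :=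
  (∏ i ∈ Finset.range (n + 1), Ups Q g V Set.univ (y i) ^ 2) *
      ((∫⁻ x, ENNReal.ofReal (V x) ∂ν) * ∫⁻ x, ENNReal.ofReal (V x) ∂ν') /
    (ENNReal.ofReal emD ^ (2 * (n - 1)) * Phi Q g ν D (y 0) (y 1) * Phi Q g ν' D (y 0) (y 1) *
      ∏ i ∈ Finset.Icc 2 n, Psi g lamD D (y i) ^ 2)

lemma div_filtSeq_univ_le_forgettingRatio [IsSFiniteKernel Q]
    (hg : ∀ y, Measurable fun x => g x y) (hD : IsLDSet Q D lamD emD epD) (hn : 1 ≤ n) :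
    (∏ i ∈ Finset.range (n + 1), Ups Q g V Set.univ (y i) ^ 2) *
        ((∫⁻ x, ENNReal.ofReal (V x) ∂ν) * ∫⁻ x, ENNReal.ofReal (V x) ∂ν') /
      (filtSeq Q g ν y n Set.univ * filtSeq Q g ν' y n Set.univ) ≤
      forgettingRatio Q g V D lamD emD ν ν' y n := by
  obtain ⟨m, rfl⟩ := Nat.exists_eq_add_of_le' hn
  have hlower (μ : Measure X) := (hD.pow_mul_Phi_mul_prod_Psi_le hg μ y m).trans
    (measure_mono (Set.subset_univ D))
  refine ENNReal.div_le_div le_rfl (le_trans (le_of_eq ?_) (mul_le_mul' (hlower ν) (hlower ν')))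
  rw [Finset.prod_pow, Nat.add_sub_cancel]
  ring

lemma one_le_forgettingRatio [IsMarkovKernel Q] (hg : ∀ y, Measurable fun x => g x y)
    (hV : Measurable V) (hV1 : ∀ x, 1 ≤ V x) (hD : IsLDSet Q D lamD emD epD) (hn : 1 ≤ n)
    [IsFiniteMeasure (filtSeq Q g ν y n)] [NeZero (filtSeq Q g ν y n)]
    [IsFiniteMeasure (filtSeq Q g ν' y n)] [NeZero (filtSeq Q g ν' y n)] :
    1 ≤ forgettingRatio Q g V D lamD emD ν ν' y n := by
  refine le_trans ?_ (div_filtSeq_univ_le_forgettingRatio hg hD hn)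
  rw [← ENNReal.div_self (mul_ne_zero (NeZero.ne (filtSeq Q g ν y n Set.univ))
    (NeZero.ne (filtSeq Q g ν' y n Set.univ))) (by finiteness)]
  refine ENNReal.div_le_div ((mul_le_mul' (filtSeq_univ_le hg hV hV1 ν y n)
    (filtSeq_univ_le hg hV hV1 ν' y n)).trans_eq ?_) le_rfl
  rw [Finset.prod_pow]
  ring

open Classical in
theorem ofReal_tvDist_filt_le [IsMarkovKernel Q] (hg : ∀ y, Measurable fun x => g x y)
    (hV : Measurable V) (hV1 : ∀ x, 1 ≤ V x) (hC : IsLDSet Q C lam em ep) {e : ℝ≥0∞} {K : Set Y}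
    (hK : ∀ y ∈ K, Ups Q g V Cᶜ y ≤ e * Ups Q g V Set.univ y) (hD : IsLDSet Q D lamD emD epD)
    [SFinite ν'] [IsFiniteMeasure (filtSeq Q g ν y n)] [NeZero (filtSeq Q g ν y n)]
    [IsFiniteMeasure (filtSeq Q g ν' y n)] [NeZero (filtSeq Q g ν' y n)] (hn : 1 ≤ n) {c t : ℕ}
    (hct : 2 * c + t + 2 * Nat.count (fun i => y i ∉ K) (n + 1) ≤ n + 1) :
    ENNReal.ofReal (tvDist (filt Q g ν y n) (filt Q g ν' y n)) ≤
      (1 - ENNReal.ofReal (em / ep) ^ 2) ^ t +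
        e ^ c * forgettingRatio Q g V D lamD emD ν ν' y n := by
  refine (ofReal_tvDist_inv_smul_le fun A hA =>
    filtSeq_mul_filtSeq_univ_le hg hC hV hV1 hK hct ν ν' hA).trans ?_
  rw [ENNReal.add_div, ENNReal.mul_div_cancel_right
    (mul_ne_zero (NeZero.ne (filtSeq Q g ν y n Set.univ))
      (NeZero.ne (filtSeq Q g ν' y n Set.univ))) (by finiteness), mul_div_assoc]
  gcongr
  exact div_filtSeq_univ_le_forgettingRatio hg hD hn

open Classical in
lemma count_notMem_add_sum_indicator (K : Set Y) (y : ℕ → Y) (N : ℕ) :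
    (Nat.count (fun i => y i ∉ K) N : ℝ) +
      ∑ i ∈ Finset.range N, K.indicator (fun _ => (1 : ℝ)) (y i) = N := by
  induction N with
  | zero => simp
  | succ N ih =>
    rw [Nat.count_succ, Finset.sum_range_succ, Nat.cast_add, add_add_add_comm, ih, Nat.cast_succ]
    by_cases hN : y N ∈ K <;> simp [hN]

lemma exists_excursion_budget {β γ : ℝ} (hβ : 0 ≤ β) {n m : ℕ} (hn : 4 ≤ (γ - β) * n / 2)
    (hm : (1 + γ) * n / 2 + m ≤ n + 1) :
    ∃ c t : ℕ, (γ - β) * n / 2 ≤ 2 * c ∧ β * n ≤ t ∧ 2 * c + t + 2 * m ≤ n + 1 := by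
  have ht : (⌈β * n⌉₊ : ℝ) < β * n + 1 := Nat.ceil_lt_add_one (by positivity)
  have hc : (⌊(γ - β) * n / 2 - 1⌋₊ : ℝ) ≤ (γ - β) * n / 2 - 1 := Nat.floor_le (by linarith)
  have hc' := Nat.lt_floor_add_one ((γ - β) * n / 2 - 1)
  refine ⟨⌊(γ - β) * n / 2 - 1⌋₊, ⌈β * n⌉₊, by linarith, Nat.le_ceil _, ?_⟩
  rify
  linarith

lemma exists_le_forall_one_le_rpow_add_rpow (hem : 0 < em) (hep : 0 < ep) {β δ η : ℝ}
    (hβ : 0 ≤ β) (hδ : 0 < δ) (hη : η ∈ Set.Ioo (0 : ℝ) 1) :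
    ∃ em', 0 < em' ∧ em' ≤ em ∧ em' < ep ∧ ∀ n : ℕ, δ * n / 2 < 4 →
      1 ≤ (1 - (em' / ep) ^ 2) ^ (β * n) + η ^ (δ * n / 2) := by
  have hcont : ContinuousAt (fun s : ℝ => (1 - (s / ep) ^ 2) ^ (β * (8 / δ))) 0 :=
    ContinuousAt.rpow_const (by fun_prop) (Or.inl (by norm_num))
  have hclose : ∀ᶠ s in nhds (0 : ℝ), 1 - η ^ (4 : ℝ) < (1 - (s / ep) ^ 2) ^ (β * (8 / δ)) :=
    hcont.eventually_const_lt (by simpa using Real.rpow_pos_of_pos hη.1 4)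
  obtain ⟨s, ⟨hs, hsep⟩, hs0, hsem⟩ := (((hclose.and (eventually_lt_nhds hep)).filter_mono
    nhdsWithin_le_nhds).and (Ioc_mem_nhdsGT hem)).exists
  refine ⟨s, hs0, hsem, hsep, fun n hn => ?_⟩
  have hratio : (s / ep) ^ 2 < 1 :=
    pow_lt_one₀ (by positivity) ((div_lt_one hep).mpr hsep) two_ne_zero
  have hlow : (1 - (s / ep) ^ 2) ^ (β * (8 / δ)) ≤ (1 - (s / ep) ^ 2) ^ (β * n) := by
    refine Real.rpow_le_rpow_of_exponent_ge (sub_pos.mpr hratio) (by simp [sq_nonneg]) ?_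
    gcongr
    rw [le_div_iff₀ hδ]
    linarith
  have hη4 : η ^ (4 : ℝ) ≤ η ^ (δ * n / 2) := Real.rpow_le_rpow_of_exponent_ge hη.1 hη.2.le hn.le
  linarith

lemma one_sub_ofReal_sq_pow_le {q : ℝ} (hq0 : 0 ≤ q) (hq1 : q < 1) {a : ℝ} {t : ℕ} (ha : a ≤ t) :
    (1 - ENNReal.ofReal q ^ 2) ^ t ≤ ENNReal.ofReal ((1 - q ^ 2) ^ a) := by
  have hpos : 0 < 1 - q ^ 2 := sub_pos.mpr (pow_lt_one₀ hq0 hq1 two_ne_zero)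
  rw [← ENNReal.ofReal_pow hq0, ← ENNReal.ofReal_one, ← ENNReal.ofReal_sub _ (sq_nonneg q),
    ← ENNReal.ofReal_pow hpos.le, ← Real.rpow_natCast]
  exact ENNReal.ofReal_le_ofReal
    (Real.rpow_le_rpow_of_exponent_ge hpos (by simp [sq_nonneg]) ha)

lemma ofReal_sq_pow_le {η : ℝ} (hη : η ∈ Set.Ioo (0 : ℝ) 1) {a : ℝ} {c : ℕ} (ha : a ≤ 2 * c) :
    ENNReal.ofReal (η ^ 2) ^ c ≤ ENNReal.ofReal (η ^ a) := by
  rw [← ENNReal.ofReal_pow (sq_nonneg η), ← pow_mul, ← Real.rpow_natCast]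
  exact ENNReal.ofReal_le_ofReal
    (Real.rpow_le_rpow_of_exponent_ge hη.1 hη.2.le (by exact_mod_cast ha))

end Forgetting

theorem forgetting_hmm_stmt5_general {X Y : Type*} [MeasurableSpace X] (Q : Kernel X X)
    [IsMarkovKernel Q] (g : X → Y → ℝ) (hg : ∀ y, Measurable fun x => g x y) (K : Set Y)
    (V : X → ℝ) (hV : Measurable V) (hV1 : ∀ x, 1 ≤ V x) (γ β : ℝ) (hβ : β ∈ Set.Ioo (0 : ℝ) γ)
    (η : ℝ) (hη : η ∈ Set.Ioo (0 : ℝ) 1) (C : Set X) (lamC : Measure X) (emC epC : ℝ)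
    (hC : IsLDSet Q C lamC emC epC)
    (hK : ∀ y ∈ K, Ups Q g V Cᶜ y ≤ ENNReal.ofReal (η ^ 2) * Ups Q g V Set.univ y) :
    ∃ em' ≤ emC, IsLDSet Q C lamC em' epC ∧
      ∀ (D : Set X) (lamD : Measure X) (emD epD : ℝ), IsLDSet Q D lamD emD epD →
      ∀ n : ℕ, 1 ≤ n → ∀ y : ℕ → Y,
        (1 + γ) * n / 2 ≤ ∑ i ∈ Finset.range (n + 1), K.indicator (fun _ => (1 : ℝ)) (y i) →
        ∀ ν ν' : Measure X, SFinite ν' →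
        (0 < filtSeq Q g ν y n Set.univ ∧ filtSeq Q g ν y n Set.univ ≠ ⊤) →
        (0 < filtSeq Q g ν' y n Set.univ ∧ filtSeq Q g ν' y n Set.univ ≠ ⊤) →
        ENNReal.ofReal (tvDist (filt Q g ν y n) (filt Q g ν' y n)) ≤
          ENNReal.ofReal ((1 - (em' / epC) ^ 2) ^ (β * n)) +
            ENNReal.ofReal (η ^ ((γ - β) * n / 2)) * forgettingRatio Q g V D lamD emD ν ν' y n := by
  classical
  obtain ⟨em', hem', hle, hlt, hshort⟩ := exists_le_forall_one_le_rpow_add_rpow hC.2.2.1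
    hC.2.2.2.1 hβ.1.le (sub_pos.mpr hβ.2) hη
  have hq1 : em' / epC < 1 := (div_lt_one hC.2.2.2.1).mpr hlt
  have hq0 : 0 ≤ em' / epC := div_nonneg hem'.le hC.2.2.2.1.le
  have hC' := hC.of_le hem' hle
  refine ⟨em', hle, hC', fun D lamD emD epD hD n hn y hy ν ν' _ hM hM' => ?_⟩
  have : IsFiniteMeasure (filtSeq Q g ν y n) := ⟨hM.2.lt_top⟩
  have : IsFiniteMeasure (filtSeq Q g ν' y n) := ⟨hM'.2.lt_top⟩
  have : NeZero (filtSeq Q g ν y n) := ⟨Measure.measure_univ_pos.mp hM.1⟩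
  have : NeZero (filtSeq Q g ν' y n) := ⟨Measure.measure_univ_pos.mp hM'.1⟩
  rcases lt_or_ge ((γ - β) * n / 2) 4 with hk | hk
  · have hprob (μ : Measure X) [IsFiniteMeasure (filtSeq Q g μ y n)]
        [NeZero (filtSeq Q g μ y n)] : IsProbabilityMeasure (filt Q g μ y n) :=
      isProbabilityMeasureSMul
    have := hprob ν
    have := hprob ν'
    calc _ ≤ 1 := ofReal_tvDist_le fun A _ => prob_le_one.trans le_add_self
      _ ≤ ENNReal.ofReal ((1 - (em' / epC) ^ 2) ^ (β * n) + η ^ ((γ - β) * n / 2)) :=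
          ENNReal.one_le_ofReal.mpr (hshort n hk)
      _ ≤ _ := ENNReal.ofReal_add_le.trans (add_le_add le_rfl (le_mul_of_one_le_right zero_le
          (one_le_forgettingRatio hg hV hV1 hD hn)))
  · have hcount := count_notMem_add_sum_indicator K y (n + 1)
    push_cast at hcount
    obtain ⟨c, t, hc, ht, hct⟩ := exists_excursion_budget
      (m := Nat.count (fun i => y i ∉ K) (n + 1)) hβ.1.le hk (by linarith)
    refine (ofReal_tvDist_filt_le hg hV hV1 hC' hK hD hn hct).trans ?_
    gcongr
    exacts [one_sub_ofReal_sq_pow_le hq0 hq1 ht, ofReal_sq_pow_le hη hc]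

/-- Corollary 4 of the paper: under (H2), given an LD-set `D`, `γ ∈ (0,1)` and
`β ∈ (0,γ)`, for any `η ∈ (0,1)` there exists an LD-set `C` such that for any `n ≥ 1`, any
observations `y_{0:n}` with `Σ_{i≤n} 1_K(y_i) ≥ (1+γ)n/2`, and any initial distributions
`ν, ν'` for which the filtering distributions are well defined,
`‖φ_{ν,n} − φ_{ν',n}‖_TV ≤ ρ_C^{βn} + η^{(γ−β)n/2} ∏_{i≤n} Υ_X(y_i)² ν(V) ν'(V) /
[(ε⁻_D)^{2(n−1)} Φ_{ν,D}(y₀,y₁) Φ_{ν',D}(y₀,y₁) ∏_{i=2}^n Ψ_D(y_i)²]`. -/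
theorem forgetting_hmm_stmt5 {X Y : Type*} [MeasurableSpace X] [MeasurableSpace Y]
    (Q : Kernel X X) [IsMarkovKernel Q]
    (g : X → Y → ℝ) (hgmeas : Measurable (Function.uncurry g)) (hgnn : ∀ x y, 0 ≤ g x y)
    (K : Set Y) (V : X → ℝ) (hVmeas : Measurable V) (hV1 : ∀ x, 1 ≤ V x)
    -- (H2): for every `η > 0` there is an LD-set `C` with `Υ_{C^c} ≤ η Υ_X` on `K`
    (hH2 : ∀ η : ℝ, 0 < η → ∃ (C : Set X) (lamC : Measure X) (emC epC : ℝ),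
      IsLDSet Q C lamC emC epC ∧
        ∀ y ∈ K, Ups Q g V Cᶜ y ≤ ENNReal.ofReal η * Ups Q g V Set.univ y)
    (D : Set X) (lamD : Measure X) (emD epD : ℝ) (hD : IsLDSet Q D lamD emD epD)
    (γ β : ℝ) (hγ : γ ∈ Set.Ioo (0 : ℝ) 1) (hβ : β ∈ Set.Ioo (0 : ℝ) γ)
    (η : ℝ) (hη : η ∈ Set.Ioo (0 : ℝ) 1) :
    ∃ (C : Set X) (lamC : Measure X) (emC epC : ℝ), IsLDSet Q C lamC emC epC ∧
      ∀ n : ℕ, 1 ≤ n → ∀ y : ℕ → Y,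
        (1 + γ) * n / 2 ≤
            (∑ i ∈ Finset.range (n + 1), K.indicator (fun _ => (1 : ℝ)) (y i)) →
        ∀ ν ν' : Measure X, IsProbabilityMeasure ν → IsProbabilityMeasure ν' →
        (0 < filtSeq Q g ν y n Set.univ ∧ filtSeq Q g ν y n Set.univ ≠ ⊤) →
        (0 < filtSeq Q g ν' y n Set.univ ∧ filtSeq Q g ν' y n Set.univ ≠ ⊤) →
        ENNReal.ofReal (tvDist (filt Q g ν y n) (filt Q g ν' y n))
          ≤ ENNReal.ofReal ((1 - (emC / epC) ^ 2) ^ (β * n))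
            + (ENNReal.ofReal (η ^ ((γ - β) * n / 2)) *
                (∏ i ∈ Finset.range (n + 1), (Ups Q g V Set.univ (y i)) ^ 2) *
                ((∫⁻ x, ENNReal.ofReal (V x) ∂ν) * ∫⁻ x, ENNReal.ofReal (V x) ∂ν'))
              / (ENNReal.ofReal emD ^ (2 * (n - 1)) *
                  Phi Q g ν D (y 0) (y 1) * Phi Q g ν' D (y 0) (y 1) *
                  ∏ i ∈ Finset.Icc 2 n, (Psi g lamD D (y i)) ^ 2) := by
  obtain ⟨C, lamC, emC, epC, hC, hK⟩ := hH2 (η ^ 2) (pow_pos hη.1 2)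
  obtain ⟨em', -, hC', hbound⟩ := forgetting_hmm_stmt5_general Q g
    (fun y => hgmeas.comp measurable_prodMk_right) K V hVmeas hV1 γ β hβ η hη C lamC emC epC hC hK
  refine ⟨C, lamC, em', epC, hC', fun n hn y hy ν ν' _ _ hM hM' => ?_⟩
  rw [mul_assoc, mul_div_assoc]
  exact hbound D lamD emD epD hD n hn y hy ν ν' inferInstance hM hM'
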